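/- arXiv:1508.03301 — 2 statements merged into one kernel-verified Lean document; each statement's English description precedes it below -/
import Mathlib

section
/- Let X be a Banach space, f : X → X a differentiable map, and Λ ⊆ X a compact set with f(Λ) = Λ on which f restricts to a homeomorphism of Λ whose inverse (f|_Λ)^{−1} is Lipschitz. Suppose there are α ∈ (0,1] and L' > 0 such that ‖Df_x − Df_y‖ ≤ L' |x − y|^α for all x, y ∈ Λ. Set b = sup_{x∈Λ} ‖Df_x‖ and L = max{Lip((f|_Λ)^{−1}), 1}. Then for every a > b L^α there exists M > 0 such that for all n ≥ 1 and all x, y ∈ Λ, ‖Df^n_{f^{−n}x} − Df^n_{f^{−n}y}‖ ≤ M aⁿ |x − y|^α. -/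
/-- `backDeriv f finv n x` is the composition
`Df_{f⁻¹x} ∘ Df_{f⁻²x} ∘ ⋯ ∘ Df_{f⁻ⁿx}`, i.e. the derivative of `f^n` along the
backward orbit of `x` (backward iterates being computed with `finv`). -/
noncomputable def backDeriv {X : Type*} [NormedAddCommGroup X] [NormedSpace ℝ X]
    (f finv : X → X) : ℕ → X → (X →L[ℝ] X)
  | 0, _ => ContinuousLinearMap.id ℝ X
  | n + 1, x => (backDeriv f finv n x).comp (fderiv ℝ f (finv^[n + 1] x))

/-!
Write `Dₙ(x)` for `backDeriv f finv n x`. Splitting `Dₙ₊₁(x) - Dₙ₊₁(y)` by the product rule as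
`(Dₙ(x) - Dₙ(y)) ∘ Df_{x'} + Dₙ(y) ∘ (Df_{x'} - Df_{y'})`, where `x'` and `y'` are the `(n+1)`-st
backward iterates, the first term costs a factor `b` and the second is at most
`bⁿ · L' · (L ^ α)ⁿ⁺¹ · ‖x - y‖ ^ α`. Solutions of the resulting recursion
`uₙ₊₁ ≤ b uₙ + C (b L ^ α)ⁿ`, `u₀ = 0`, stay below `C aⁿ / (a - b)` because `b ≤ b L ^ α < a`.
-/

theorem le_div_sub_mul_pow_of_succ_le {K : Type*} [Field K] [LinearOrder K] [IsStrictOrderedRing K]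
    {u : ℕ → K} {a b C : K} (hb : 0 ≤ b) (hba : b < a) (hu_zero : u 0 ≤ C / (a - b))
    (hu_succ : ∀ n, u (n + 1) ≤ b * u n + C * a ^ n) (n : ℕ) :
    u n ≤ C / (a - b) * a ^ n := by
  induction n with
  | zero => simpa using hu_zero
  | succ n ih =>
    have hab : a - b ≠ 0 := (sub_pos.2 hba).ne'
    calc u (n + 1) ≤ b * u n + C * a ^ n := hu_succ n
      _ ≤ b * (C / (a - b) * a ^ n) + C * a ^ n := by gcongr
      _ = C / (a - b) * a ^ (n + 1) := by field_simp; ring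

theorem dist_comp_iterate_le {Y Z : Type*} [PseudoMetricSpace Y] [PseudoMetricSpace Z]
    {A : Y → Z} {g : Y → Y} {s : Set Y} {C K r : ℝ} (hC : 0 ≤ C) (hK : 0 ≤ K) (hr : 0 ≤ r)
    (hmaps : Set.MapsTo g s s) (hLip : ∀ x ∈ s, ∀ y ∈ s, dist (g x) (g y) ≤ K * dist x y)
    (hHolder : ∀ x ∈ s, ∀ y ∈ s, dist (A x) (A y) ≤ C * dist x y ^ r) (n : ℕ) {x y : Y}
    (hx : x ∈ s) (hy : y ∈ s) :
    dist (A (g^[n] x)) (A (g^[n] y)) ≤ C * (K ^ r) ^ n * dist x y ^ r := by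
  induction n generalizing x y with
  | zero => simpa using hHolder x hx y hy
  | succ n ih =>
    calc dist (A (g^[n] (g x))) (A (g^[n] (g y)))
        ≤ C * (K ^ r) ^ n * dist (g x) (g y) ^ r := ih (hmaps hx) (hmaps hy)
      _ ≤ C * (K ^ r) ^ n * (K * dist x y) ^ r := by gcongr; exact hLip x hx y hy
      _ = C * (K ^ r) ^ (n + 1) * dist x y ^ r := by rw [Real.mul_rpow hK dist_nonneg]; ring

theorem norm_comp_sub_comp_le {𝕜 E F G : Type*} [NontriviallyNormedField 𝕜]
    [SeminormedAddCommGroup E] [SeminormedAddCommGroup F] [SeminormedAddCommGroup G]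
    [NormedSpace 𝕜 E] [NormedSpace 𝕜 F] [NormedSpace 𝕜 G] (A A' : F →L[𝕜] G) (B B' : E →L[𝕜] F) :
    ‖A.comp B - A'.comp B'‖ ≤ ‖A - A'‖ * ‖B‖ + ‖A'‖ * ‖B - B'‖ := by
  have hsplit : A.comp B - A'.comp B' = (A - A').comp B + A'.comp (B - B') := by
    rw [ContinuousLinearMap.sub_comp, ContinuousLinearMap.comp_sub, sub_add_sub_cancel]
  rw [hsplit]
  exact norm_add_le_of_le (ContinuousLinearMap.opNorm_comp_le _ _)
    (ContinuousLinearMap.opNorm_comp_le _ _)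

section BackwardOrbits

variable {X : Type*} [NormedAddCommGroup X] [NormedSpace ℝ X] {f finv : X → X} {Λ : Set X}
  {α L' b L : ℝ} {x y : X}

theorem norm_backDeriv_le (hmaps : Set.MapsTo finv Λ Λ) (hb : ∀ x ∈ Λ, ‖fderiv ℝ f x‖ ≤ b)
    (hx : x ∈ Λ) (n : ℕ) : ‖backDeriv f finv n x‖ ≤ b ^ n := by
  induction n with
  | zero =>
    simpa only [backDeriv, pow_zero] using ContinuousLinearMap.norm_id_le (𝕜 := ℝ) (E := X)
  | succ n ih =>
    have hfderiv : ‖fderiv ℝ f (finv^[n + 1] x)‖ ≤ b := hb _ (hmaps.iterate (n + 1) hx)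
    calc ‖backDeriv f finv (n + 1) x‖
        ≤ ‖backDeriv f finv n x‖ * ‖fderiv ℝ f (finv^[n + 1] x)‖ :=
          ContinuousLinearMap.opNorm_comp_le _ _
      _ ≤ b ^ n * b := mul_le_mul ih hfderiv (norm_nonneg _) ((norm_nonneg _).trans ih)
      _ = b ^ (n + 1) := (pow_succ b n).symm

theorem norm_backDeriv_succ_sub_le (hmaps : Set.MapsTo finv Λ Λ) (hL : 0 ≤ L)
    (hLip : ∀ x ∈ Λ, ∀ y ∈ Λ, ‖finv x - finv y‖ ≤ L * ‖x - y‖) (hα : 0 ≤ α) (hL' : 0 ≤ L')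
    (hHolder : ∀ x ∈ Λ, ∀ y ∈ Λ, ‖fderiv ℝ f x - fderiv ℝ f y‖ ≤ L' * ‖x - y‖ ^ α)
    (hb : ∀ x ∈ Λ, ‖fderiv ℝ f x‖ ≤ b) (hx : x ∈ Λ) (hy : y ∈ Λ) (n : ℕ) :
    ‖backDeriv f finv (n + 1) x - backDeriv f finv (n + 1) y‖ ≤
      b * ‖backDeriv f finv n x - backDeriv f finv n y‖ +
        L' * L ^ α * ‖x - y‖ ^ α * (b * L ^ α) ^ n := by
  have hb_nonneg : 0 ≤ b := (norm_nonneg _).trans (hb x hx)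
  have hfderiv : ‖fderiv ℝ f (finv^[n + 1] x)‖ ≤ b := hb _ (hmaps.iterate (n + 1) hx)
  have hfderiv_sub : ‖fderiv ℝ f (finv^[n + 1] x) - fderiv ℝ f (finv^[n + 1] y)‖ ≤
      L' * (L ^ α) ^ (n + 1) * ‖x - y‖ ^ α := by
    simp only [← dist_eq_norm] at hLip hHolder ⊢
    exact dist_comp_iterate_le hL' hL hα hmaps hLip hHolder (n + 1) hx hy
  calc ‖backDeriv f finv (n + 1) x - backDeriv f finv (n + 1) y‖
      ≤ ‖backDeriv f finv n x - backDeriv f finv n y‖ * ‖fderiv ℝ f (finv^[n + 1] x)‖ +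
          ‖backDeriv f finv n y‖ *
            ‖fderiv ℝ f (finv^[n + 1] x) - fderiv ℝ f (finv^[n + 1] y)‖ :=
        norm_comp_sub_comp_le _ _ _ _
    _ ≤ ‖backDeriv f finv n x - backDeriv f finv n y‖ * b +
          b ^ n * (L' * (L ^ α) ^ (n + 1) * ‖x - y‖ ^ α) := by
        gcongr
        exact norm_backDeriv_le hmaps hb hy n
    _ = b * ‖backDeriv f finv n x - backDeriv f finv n y‖ +
          L' * L ^ α * ‖x - y‖ ^ α * (b * L ^ α) ^ n := by ring

theorem norm_backDeriv_sub_le (hmaps : Set.MapsTo finv Λ Λ) (hL : 0 ≤ L)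
    (hLip : ∀ x ∈ Λ, ∀ y ∈ Λ, ‖finv x - finv y‖ ≤ L * ‖x - y‖) (hα : 0 ≤ α) (hL' : 0 ≤ L')
    (hHolder : ∀ x ∈ Λ, ∀ y ∈ Λ, ‖fderiv ℝ f x - fderiv ℝ f y‖ ≤ L' * ‖x - y‖ ^ α)
    (hb : ∀ x ∈ Λ, ‖fderiv ℝ f x‖ ≤ b) {a : ℝ} (hba : b < a) (ha : b * L ^ α ≤ a)
    (hx : x ∈ Λ) (hy : y ∈ Λ) (n : ℕ) :
    ‖backDeriv f finv n x - backDeriv f finv n y‖ ≤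
      L' * L ^ α / (a - b) * a ^ n * ‖x - y‖ ^ α := by
  have hb_nonneg : 0 ≤ b := (norm_nonneg _).trans (hb x hx)
  let u (n : ℕ) : ℝ := ‖backDeriv f finv n x - backDeriv f finv n y‖
  have hu_zero : u 0 ≤ L' * L ^ α * ‖x - y‖ ^ α / (a - b) := by
    have hu : u 0 = 0 := by simp only [u, backDeriv, sub_self, norm_zero]
    rw [hu]
    exact div_nonneg (by positivity) (sub_pos.2 hba).le
  have hu_succ (n : ℕ) : u (n + 1) ≤ b * u n + L' * L ^ α * ‖x - y‖ ^ α * a ^ n :=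
    (norm_backDeriv_succ_sub_le hmaps hL hLip hα hL' hHolder hb hx hy n).trans (by gcongr)
  calc u n ≤ L' * L ^ α * ‖x - y‖ ^ α / (a - b) * a ^ n :=
        le_div_sub_mul_pow_of_succ_le hb_nonneg hba hu_zero hu_succ n
    _ = L' * L ^ α / (a - b) * a ^ n * ‖x - y‖ ^ α := by ring

end BackwardOrbits

theorem holder_estimate_backward_derivatives_general
    {X : Type*} [NormedAddCommGroup X] [NormedSpace ℝ X]
    {f finv : X → X} {Λ : Set X} {α L' b L : ℝ}
    (_hdiff : ∀ x ∈ Λ, DifferentiableAt ℝ f x)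
    (hmaps : Set.MapsTo finv Λ Λ) (_hinv : Set.RightInvOn finv f Λ)
    (hL : 1 ≤ L) (hLip : ∀ x ∈ Λ, ∀ y ∈ Λ, ‖finv x - finv y‖ ≤ L * ‖x - y‖)
    (hα : 0 ≤ α) (hL' : 0 < L')
    (hHolder : ∀ x ∈ Λ, ∀ y ∈ Λ, ‖fderiv ℝ f x - fderiv ℝ f y‖ ≤ L' * ‖x - y‖ ^ α)
    (hb : ∀ x ∈ Λ, ‖fderiv ℝ f x‖ ≤ b) {a : ℝ} (ha : b * L ^ α < a) :
    ∃ M > 0, ∀ n : ℕ, ∀ x ∈ Λ, ∀ y ∈ Λ,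
      ‖backDeriv f finv n x - backDeriv f finv n y‖ ≤ M * a ^ n * ‖x - y‖ ^ α := by
  rcases Λ.eq_empty_or_nonempty with rfl | ⟨z, hz⟩
  · exact ⟨1, one_pos, fun _ _ hx ↦ hx.elim⟩
  have hb_nonneg : 0 ≤ b := (norm_nonneg _).trans (hb z hz)
  have hL_nonneg : 0 ≤ L := zero_le_one.trans hL
  have hba : b < a := (le_mul_of_one_le_right hb_nonneg (Real.one_le_rpow hL hα)).trans_lt ha
  have hM : 0 < L' * L ^ α / (a - b) :=
    div_pos (mul_pos hL' (Real.rpow_pos_of_pos (zero_lt_one.trans_le hL) α)) (sub_pos.2 hba)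
  exact ⟨_, hM, fun n _ hx _ hy ↦
    norm_backDeriv_sub_le hmaps hL_nonneg hLip hα hL'.le hHolder hb hba ha.le hx hy n⟩

/-- **Hölder estimate along backward orbits** (Lemma 5.11): if `f` is `C^{1+α}` on the
compact invariant set `Λ` and `(f|Λ)⁻¹` is Lipschitz, then for every `a > b L^α` there
is `M` such that `‖Df^n_{f⁻ⁿx} − Df^n_{f⁻ⁿy}‖ ≤ M aⁿ |x − y|^α` on `Λ`. -/
theorem holder_estimate_backward_derivatives
    {X : Type*} [NormedAddCommGroup X] [NormedSpace ℝ X] [CompleteSpace X]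
    (f finv : X → X) (Λ : Set X) (α L' b L : ℝ)
    (hdiff : Differentiable ℝ f)
    (hΛcomp : IsCompact Λ) (hfΛ : f '' Λ = Λ)
    -- `f|Λ` is a homeomorphism with inverse `finv`
    (hfinvΛ : ∀ x ∈ Λ, finv x ∈ Λ) (hfinv1 : ∀ x ∈ Λ, f (finv x) = x)
    (hfinv2 : ∀ x ∈ Λ, finv (f x) = x) (hfinvC : ContinuousOn finv Λ)
    -- `(f|Λ)⁻¹` is Lipschitz with constant `L ≥ 1`
    (hL : 1 ≤ L) (hLip : ∀ x ∈ Λ, ∀ y ∈ Λ, ‖finv x - finv y‖ ≤ L * ‖x - y‖)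
    -- the derivative is `α`-Hölder on `Λ`
    (hα : 0 < α) (hα1 : α ≤ 1) (hL' : 0 < L')
    (hHolder : ∀ x ∈ Λ, ∀ y ∈ Λ, ‖fderiv ℝ f x - fderiv ℝ f y‖ ≤ L' * ‖x - y‖ ^ α)
    -- `b` bounds the derivative on `Λ`
    (hb : ∀ x ∈ Λ, ‖fderiv ℝ f x‖ ≤ b) :
    ∀ a : ℝ, b * L ^ α < a →
      ∃ M > 0, ∀ n : ℕ, 1 ≤ n → ∀ x ∈ Λ, ∀ y ∈ Λ,
        ‖backDeriv f finv n x - backDeriv f finv n y‖ ≤ M * a ^ n * ‖x - y‖ ^ α := by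
  intro a ha
  obtain ⟨M, hM, hbound⟩ := holder_estimate_backward_derivatives_general (fun x _ ↦ hdiff x)
    hfinvΛ hfinv1 hL hLip hα.le hL' hHolder hb ha
  exact ⟨M, hM, fun n _ ↦ hbound n⟩
end

section
/- Any collection of pairwise disjoint observable subsets of a separable Banach space is at most countable. -/
open MeasureTheory

/-- Kato's gap metric between two subspaces: the Hausdorff distance between their
intersections with the unit sphere. -/
noncomputable def gapDist {X : Type*} [NormedAddCommGroup X] [NormedSpace ℝ X]
    (E F : Submodule ℝ X) : ℝ :=
  Metric.hausdorffDist ((E : Set X) ∩ Metric.sphere 0 1) ((F : Set X) ∩ Metric.sphere 0 1)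

/-- A Borel set `K` in a Banach space `X` is *observable* if there are a point `x₀`, a
splitting `X = F ⊕ E` with `E` finite dimensional, a nonempty open set `U ⊆ F` and
`δ > 0` such that for every `x ∈ U` and every finite-dimensional subspace `E'` with
`dim E' = dim E` and `gap(E', E) < δ`, the slice of `K` by the affine subspace
`x₀ + x + E'` has positive measure for every (equivalently, some) translation-invariant
Haar measure on `E'`. -/
def Observable {X : Type*} [NormedAddCommGroup X] [NormedSpace ℝ X]
    [MeasurableSpace X] [BorelSpace X] (K : Set X) : Prop :=
  MeasurableSet K ∧
  ∃ (x₀ : X) (F E : Submodule ℝ X), IsClosed (F : Set X) ∧ FiniteDimensional ℝ E ∧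
    IsCompl F E ∧
    ∃ (U : Set F) (δ : ℝ), IsOpen U ∧ U.Nonempty ∧ 0 < δ ∧
      ∀ x ∈ U, ∀ E' : Submodule ℝ X, FiniteDimensional ℝ E' →
        Module.finrank ℝ E' = Module.finrank ℝ E → gapDist E' E < δ →
        ∀ μ : Measure E', μ.IsAddHaarMeasure →
          0 < μ {v : E' | x₀ + (x : X) + (v : X) ∈ K}

/-!
An injective parametrization `A : ℝⁿ → X` of `E` may be perturbed: for `L` close to `A`, the image
of `L` is close to `E` in the gap metric and still complements `F`. For such an `L` and `u ∈ U`,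
every point `p` close enough to `x₀ + u` lies on `x₀ + x + L(ℝⁿ)` for some `x ∈ U`, so that
`{v | p + L v ∈ K}` has positive Lebesgue measure. As `X` and the space of maps `ℝⁿ → X` are
separable, countably many pairs `(L, p)` detect every observable set, while a single pair gives
positive measure to at most countably many pairwise disjoint sets.
-/

open Filter Function Topology

section Gap

variable {X : Type*} [NormedAddCommGroup X] [NormedSpace ℝ X]

theorem dist_self_normalize {v : X} (hv : v ≠ 0) :
    dist v (NormedSpace.normalize v) = |‖v‖ - 1| := by
  have hunit : ‖NormedSpace.normalize v‖ = 1 := NormedSpace.norm_normalize_eq_one_iff.mpr hv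
  calc dist v (NormedSpace.normalize v)
      = ‖(‖v‖ - 1) • NormedSpace.normalize v‖ := by
        rw [dist_eq_norm, sub_smul, one_smul, NormedSpace.norm_smul_normalize]
    _ = |‖v‖ - 1| := by rw [norm_smul, hunit, mul_one, Real.norm_eq_abs]

theorem dist_normalize_le_two_mul_norm_sub {u v : X} (hu : ‖u‖ = 1) (hv : v ≠ 0) :
    dist u (NormedSpace.normalize v) ≤ 2 * ‖u - v‖ :=
  calc dist u (NormedSpace.normalize v)
      ≤ dist u v + dist v (NormedSpace.normalize v) := dist_triangle _ _ _
    _ = ‖u - v‖ + |‖u‖ - ‖v‖| := by rw [dist_self_normalize hv, dist_eq_norm, hu, abs_sub_comm]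
    _ ≤ 2 * ‖u - v‖ := by linarith [abs_norm_sub_norm_le u v]

theorem normalize_mem_inter_sphere {E : Submodule ℝ X} {v : X} (hvE : v ∈ E) (hv : v ≠ 0) :
    NormedSpace.normalize v ∈ (E : Set X) ∩ Metric.sphere 0 1 :=
  ⟨E.smul_mem _ hvE, mem_sphere_zero_iff_norm.mpr (NormedSpace.norm_normalize_eq_one_iff.mpr hv)⟩

theorem gapDist_range_le {V : Type*} [AddCommGroup V] [Module ℝ V] {f g : V →ₗ[ℝ] X} {η : ℝ}
    (hη₀ : 0 ≤ η) (hη : η ≤ 1 / 2) (hfg : ∀ v, ‖g v - f v‖ ≤ η * ‖f v‖) :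
    gapDist g.range f.range ≤ 4 * η := by
  have norm_f_le (v : V) : ‖f v‖ ≤ 2 * ‖g v‖ := by
    have hmul : η * ‖f v‖ ≤ 1 / 2 * ‖f v‖ := by gcongr
    linarith [hfg v, norm_sub_norm_le (f v) (g v), norm_sub_rev (f v) (g v)]
  refine Metric.hausdorffDist_le_of_mem_dist (by positivity) ?_ ?_
  · rintro _ ⟨⟨v, rfl⟩, hgv⟩
    have hgv : ‖g v‖ = 1 := mem_sphere_zero_iff_norm.mp hgv
    have hfv : f v ≠ 0 := fun h ↦ by
      have := hfg v
      norm_num [h, hgv] at this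
    refine ⟨_, normalize_mem_inter_sphere ⟨v, rfl⟩ hfv, ?_⟩
    calc dist (g v) (NormedSpace.normalize (f v))
        ≤ 2 * ‖g v - f v‖ := dist_normalize_le_two_mul_norm_sub hgv hfv
      _ ≤ 2 * (η * (2 * ‖g v‖)) := by grw [hfg v, norm_f_le v]
      _ = 4 * η := by rw [hgv]; ring
  · rintro _ ⟨⟨v, rfl⟩, hfv⟩
    have hfv : ‖f v‖ = 1 := mem_sphere_zero_iff_norm.mp hfv
    have hgv : g v ≠ 0 := fun h ↦ by
      have := norm_f_le v
      norm_num [h, hfv] at this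
    refine ⟨_, normalize_mem_inter_sphere ⟨v, rfl⟩ hgv, ?_⟩
    calc dist (f v) (NormedSpace.normalize (g v))
        ≤ 2 * ‖f v - g v‖ := dist_normalize_le_two_mul_norm_sub hfv hgv
      _ ≤ 2 * (η * ‖f v‖) := by grw [norm_sub_rev, hfg v]
      _ ≤ 4 * η := by rw [hfv]; linarith

theorem tendsto_gapDist_range {V : Type*} [NormedAddCommGroup V] [NormedSpace ℝ V]
    [FiniteDimensional ℝ V] {A : V →L[ℝ] X} (hA : Injective A) :
    Tendsto (fun L : V →L[ℝ] X ↦ gapDist L.range A.range) (𝓝 A) (𝓝 0) := by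
  obtain ⟨C, -, hC⟩ := A.toLinearMap.injective_iff_antilipschitz.mp hA
  have norm_sub_le (L : V →L[ℝ] X) (v : V) : ‖L v - A v‖ ≤ ‖L - A‖ * C * ‖A v‖ :=
    calc ‖L v - A v‖ ≤ ‖L - A‖ * ‖v‖ := (L - A).le_opNorm v
      _ ≤ ‖L - A‖ * (C * ‖A v‖) := by
        gcongr
        exact ZeroHomClass.bound_of_antilipschitz A.toLinearMap hC v
      _ = ‖L - A‖ * C * ‖A v‖ := by ring
  have hlim : Tendsto (fun L : V →L[ℝ] X ↦ ‖L - A‖ * C) (𝓝 A) (𝓝 0) := by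
    have hcont : Continuous fun L : V →L[ℝ] X ↦ ‖L - A‖ * C := by fun_prop
    simpa using hcont.tendsto A
  refine squeeze_zero' (.of_forall fun L ↦ Metric.hausdorffDist_nonneg) ?_
    (by simpa using hlim.const_mul 4)
  filter_upwards [hlim.eventually_le_const (by norm_num : (0 : ℝ) < 1 / 2)] with L hL
  exact gapDist_range_le (by positivity) hL (norm_sub_le L)

end Gap

theorem isCompl_ker_range_of_bijective_comp {R V X W : Type*} [Ring R] [AddCommGroup V]
    [AddCommGroup X] [AddCommGroup W] [Module R V] [Module R X] [Module R W]
    {f : V →ₗ[R] X} {g : X →ₗ[R] W} (h : Bijective (g ∘ₗ f)) : IsCompl g.ker f.range := by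
  constructor
  · rw [Submodule.disjoint_def]
    rintro _ hker ⟨v, rfl⟩
    have hv : v = 0 := (map_eq_zero_iff (g ∘ₗ f) h.injective).mp hker
    rw [hv, map_zero]
  · rw [codisjoint_iff, Submodule.eq_top_iff']
    intro x
    obtain ⟨v, hv⟩ := h.surjective (g x)
    have hker : x - f v ∈ g.ker := by
      rw [LinearMap.mem_ker, map_sub, sub_eq_zero]
      exact hv.symm
    exact Submodule.mem_sup.mpr ⟨_, hker, _, ⟨v, rfl⟩, sub_add_cancel x (f v)⟩

section Complement

variable {𝕜 X : Type*} [NontriviallyNormedField 𝕜] [CompleteSpace 𝕜] [NormedAddCommGroup X]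
  [NormedSpace 𝕜 X]

theorem eventually_isCompl_range {V : Type*} [NormedAddCommGroup V] [NormedSpace 𝕜 V]
    [FiniteDimensional 𝕜 V] {F : Submodule 𝕜 X} (hF : IsClosed (F : Set X)) {A : V →L[𝕜] X}
    (hA : Injective A) (hcompl : IsCompl F A.range) :
    ∀ᶠ L : V →L[𝕜] X in 𝓝 A, IsCompl F L.range := by
  have htop : Submodule.IsTopCompl A.range F :=
    (Submodule.IsCompl.isTopCompl_of_isClosed_of_finiteDimensional hcompl hF).symm
  let P : X →L[𝕜] A.range := A.range.projectionOntoL F htop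
  have hPA : Injective (P ∘L A) := fun v w hvw ↦ by
    have hP (v : V) : (P (A v) : X) = A v :=
      congrArg Subtype.val (Submodule.projectionOntoL_apply_left htop (A.rangeRestrict v))
    have hPvw : P (A v) = P (A w) := hvw
    exact hA (by rw [← hP v, hPvw, hP w])
  have hopen : IsOpen {L : V →L[𝕜] X | Injective (P ∘L L)} :=
    ContinuousLinearMap.isOpen_injective.preimage (by fun_prop)
  filter_upwards [hopen.mem_nhds hPA] with L hL
  have hdim : Module.finrank 𝕜 V = Module.finrank 𝕜 A.range :=
    (LinearMap.finrank_range_of_inj hA).symm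
  have hbij : Bijective (P.toLinearMap ∘ₗ L.toLinearMap) :=
    ⟨hL, (LinearMap.injective_iff_surjective_of_finrank_eq_finrank hdim).mp hL⟩
  simpa [P] using isCompl_ker_range_of_bijective_comp hbij

theorem eventually_exists_mem_sub_mem {F E : Submodule 𝕜 X} (hF : IsClosed (F : Set X))
    [FiniteDimensional 𝕜 E] (hcompl : IsCompl F E) {U : Set F} (hU : IsOpen U) {u : F}
    (hu : u ∈ U) : ∀ᶠ p : X in 𝓝 (u : X), ∃ x ∈ U, p - x ∈ E := by
  have htop : Submodule.IsTopCompl F E :=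
    Submodule.IsCompl.isTopCompl_of_isClosed_of_finiteDimensional hcompl hF
  let P : X →L[𝕜] F := F.projectionOntoL E htop
  have hPF (x : F) : P x = x := Submodule.projectionOntoL_apply_left htop x
  filter_upwards [(hU.preimage P.continuous).mem_nhds (by simpa [hPF] using hu)] with p hp
  refine ⟨P p, hp, (Submodule.projectionOntoL_apply_eq_zero_iff htop).mp ?_⟩
  change P (p - P p) = 0
  rw [map_sub, hPF, sub_self]

theorem exists_injective_continuousLinearMap_range_eq (E : Submodule 𝕜 X)
    [FiniteDimensional 𝕜 E] :
    ∃ (n : ℕ) (A : (Fin n → 𝕜) →L[𝕜] X), Injective A ∧ A.range = E := by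
  let e : (Fin (Module.finrank 𝕜 E) → 𝕜) ≃L[𝕜] E := .ofFinrankEq (by simp)
  refine ⟨Module.finrank 𝕜 E, E.subtypeL ∘L e, E.subtype_injective.comp e.injective, ?_⟩
  ext x
  simp

end Complement

theorem measure_setOf_add_apply_mem_pos {V X : Type*} [NormedAddCommGroup V] [NormedSpace ℝ V]
    [FiniteDimensional ℝ V] [MeasurableSpace V] [BorelSpace V] [NormedAddCommGroup X]
    [NormedSpace ℝ X] [MeasurableSpace X] [BorelSpace X] {L : V →L[ℝ] X} (hL : Injective L)
    (μ : Measure V) [μ.IsAddHaarMeasure] {K : Set X} {p q : X} (hpq : p - q ∈ L.range)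
    (hpos : ∀ ν : Measure L.range, ν.IsAddHaarMeasure → 0 < ν {w | q + (w : X) ∈ K}) :
    0 < μ {v | p + L v ∈ K} := by
  obtain ⟨w, hw⟩ := hpq
  let e : V ≃L[ℝ] L.range := (LinearEquiv.ofInjective L.toLinearMap hL).toContinuousLinearEquiv
  have hp (v : V) : p + L v = q + (e (w + v) : X) := by
    have hsub : L w = p - q := hw
    have hcoe : (e (w + v) : X) = L (w + v) := rfl
    rw [hcoe, map_add, hsub]
    abel
  calc 0 < μ.map e {w | q + (w : X) ∈ K} := hpos _ inferInstance
    _ = μ {v | q + (e v : X) ∈ K} := e.toHomeomorph.toMeasurableEquiv.map_apply _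
    _ = μ {v | q + (e (w + v) : X) ∈ K} := (measure_preimage_add μ w _).symm
    _ = μ {v | p + L v ∈ K} := by simp only [hp]

theorem Observable.exists_eventually_volume_pos {X : Type*} [NormedAddCommGroup X]
    [NormedSpace ℝ X] [MeasurableSpace X] [BorelSpace X] {K : Set X} (hK : Observable K) :
    ∃ (n : ℕ) (A : (Fin n → ℝ) →L[ℝ] X) (p₀ : X),
      ∀ᶠ L in 𝓝 A, ∀ᶠ p in 𝓝 p₀, 0 < volume {v | p + L v ∈ K} := by
  obtain ⟨-, x₀, F, E, hF, _, hcompl, U, δ, hU, ⟨u, hu⟩, hδ, hpos⟩ := hK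
  obtain ⟨n, A, hA, rfl⟩ := exists_injective_continuousLinearMap_range_eq E
  refine ⟨n, A, x₀ + u, ?_⟩
  filter_upwards [ContinuousLinearMap.isOpen_injective.mem_nhds hA,
    eventually_isCompl_range hF hA hcompl,
    (tendsto_gapDist_range hA).eventually_lt_const hδ] with L hL hLcompl hgap
  have htranslate : Tendsto (· - x₀) (𝓝 (x₀ + u)) (𝓝 (u : X)) :=
    (continuous_sub_right x₀).tendsto' _ _ (add_sub_cancel_left _ _)
  filter_upwards [htranslate.eventually (eventually_exists_mem_sub_mem hF hLcompl hU hu)]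
    with p ⟨x, hx, hpx⟩
  rw [sub_sub] at hpx
  have hdim : Module.finrank ℝ L.range = Module.finrank ℝ A.range :=
    (LinearMap.finrank_range_of_inj hL).trans (LinearMap.finrank_range_of_inj hA).symm
  exact measure_setOf_add_apply_mem_pos hL volume hpx
    (hpos x hx L.range inferInstance hdim hgap)

theorem countable_measure_preimage_pos {α β : Type*} [MeasurableSpace α] [MeasurableSpace β]
    {μ : Measure α} [SFinite μ] {f : α → β} (hf : Measurable f) {𝒞 : Set (Set β)}
    (hmeas : ∀ K ∈ 𝒞, MeasurableSet K) (hdisj : 𝒞.PairwiseDisjoint id) :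
    {K ∈ 𝒞 | 0 < μ (f ⁻¹' K)}.Countable := by
  have hcount : {K : 𝒞 | 0 < μ (f ⁻¹' K)}.Countable :=
    Measure.countable_meas_pos_of_disjoint_iUnion (fun K ↦ hf (hmeas K K.2)) fun K L hKL ↦
      (hdisj K.2 L.2 (Subtype.coe_ne_coe.mpr hKL)).preimage f
  refine (hcount.image Subtype.val).mono ?_
  rintro K ⟨hK, hpos⟩
  exact ⟨⟨K, hK⟩, hpos, rfl⟩

theorem countable_of_pairwise_disjoint_observable_general
    {X : Type*} [NormedAddCommGroup X] [NormedSpace ℝ X]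
    [TopologicalSpace.SeparableSpace X] [MeasurableSpace X] [BorelSpace X]
    (𝒞 : Set (Set X)) (hobs : ∀ K ∈ 𝒞, Observable K)
    (hdisj : 𝒞.PairwiseDisjoint id) :
    𝒞.Countable := by
  have : SecondCountableTopology X := UniformSpace.secondCountable_of_separable X
  let L (n : ℕ) : ℕ → (Fin n → ℝ) →L[ℝ] X := TopologicalSpace.denseSeq _
  let p : ℕ → X := TopologicalSpace.denseSeq X
  let detected (n i j : ℕ) : Set (Set X) := {K ∈ 𝒞 | 0 < volume {v | p j + L n i v ∈ K}}
  have detected_countable (n i j : ℕ) : (detected n i j).Countable :=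
    countable_measure_preimage_pos (f := fun v ↦ p j + L n i v) (by fun_prop)
      (fun K hK ↦ (hobs K hK).1) hdisj
  refine (Set.countable_iUnion fun n ↦ Set.countable_iUnion fun i ↦ Set.countable_iUnion fun j ↦
    detected_countable n i j).mono fun K hK ↦ ?_
  obtain ⟨n, A, p₀, hpos⟩ := (hobs K hK).exists_eventually_volume_pos
  obtain ⟨i, hpos⟩ := (TopologicalSpace.denseRange_denseSeq _).mem_nhds hpos
  obtain ⟨j, hpos⟩ := (TopologicalSpace.denseRange_denseSeq _).mem_nhds hpos
  simp only [Set.mem_iUnion]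
  exact ⟨n, i, j, hK, hpos⟩

/-- **Countability of disjoint observable sets** (Lemma 4.22): any collection of
pairwise disjoint observable subsets of a separable Banach space is at most countable. -/
theorem countable_of_pairwise_disjoint_observable
    {X : Type*} [NormedAddCommGroup X] [NormedSpace ℝ X] [CompleteSpace X]
    [TopologicalSpace.SeparableSpace X] [MeasurableSpace X] [BorelSpace X]
    (𝒞 : Set (Set X)) (hobs : ∀ K ∈ 𝒞, Observable K)
    (hdisj : 𝒞.PairwiseDisjoint id) :
    𝒞.Countable :=
  countable_of_pairwise_disjoint_observable_general 𝒞 hobs hdisj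
end
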